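/- In the modified splitting setting described below, assume additionally |u| ≤ M on Ω for some M > 0, and let τ_s, τ_α > 0 with s := −1/2 + τ_s and α := −1/2 + τ_α. Then for every integer l ≥ 1 and every η ∈ C_c^∞(Ω) with 0 ≤ η ≤ 1 there is a constant c > 0 depending on η, l, M and the structural constants but not on δ or u, such that ∫_Ω η^{2l} Γ₁^{s+1} dx ≤ c [ 1 + ∫_Ω |∇η|² η^{2l−2} Γ₁^{α+1} dx + ∫_Ω |∇η|² η^{2l−2} Γ₁^{(α+1)/(1−γ)} dx + ∫_Ω η^{2l} Γ₁^{2s − α + μ₁/2} dx ]. -/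

import Mathlib

open Real MeasureTheory

/-- Partial derivative of `v : ℝ² → ℝ` in the `i`-th coordinate direction. -/
noncomputable def pd (i : Fin 2) (v : EuclideanSpace ℝ (Fin 2) → ℝ)
    (x : EuclideanSpace ℝ (Fin 2)) : ℝ :=
  fderiv ℝ v x (EuclideanSpace.single i 1)

open scoped ContDiff

abbrev E2 := EuclideanSpace ℝ (Fin 2)

lemma pd_mul {v w : E2 → ℝ} (i : Fin 2) {x : E2} (hv : DifferentiableAt ℝ v x)
    (hw : DifferentiableAt ℝ w x) :
    pd i (fun y => v y * w y) x = v x * pd i w x + pd i v x * w x := by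
  unfold pd
  rw [fderiv_fun_mul hv hw]
  simp [mul_comm]

lemma pd_comp {v : E2 → ℝ} {h : ℝ → ℝ} {h' : ℝ} (i : Fin 2) {x : E2}
    (hv : DifferentiableAt ℝ v x) (hh : HasDerivAt h h' (v x)) :
    pd i (fun y => h (v y)) x = h' * pd i v x := by
  unfold pd
  change fderiv ℝ (h ∘ v) x _ = _
  rw [(hh.comp_hasFDerivAt x hv.hasFDerivAt).fderiv]
  simp

lemma pd_pow {v : E2 → ℝ} (i : Fin 2) (n : ℕ) {x : E2}
    (hv : DifferentiableAt ℝ v x) :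
    pd i (fun y => v y ^ (n + 1)) x = ((n : ℝ) + 1) * v x ^ n * pd i v x := by
  rw [pd_comp (h := fun t => t ^ (n + 1)) i hv (by simpa using hasDerivAt_pow (n + 1) (v x))]

lemma pd_contDiff {v : E2 → ℝ} {m n : ℕ∞ω} (i : Fin 2) (hv : ContDiff ℝ n v) (h : m + 1 ≤ n) :
    ContDiff ℝ m (pd i v) := by
  unfold pd
  exact (hv.fderiv_right h).clm_apply contDiff_const

lemma pd_cont {v : E2 → ℝ} (i : Fin 2) (hv : ContDiff ℝ 1 v) : Continuous (pd i v) :=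
  (pd_contDiff (m := 0) i hv (by simp)).continuous

lemma pd_smooth {v : E2 → ℝ} (i : Fin 2) (hv : ContDiff ℝ ∞ v) : ContDiff ℝ ∞ (pd i v) :=
  pd_contDiff i hv (by simp)

lemma pd_comm {v : E2 → ℝ} (hv : ContDiff ℝ 2 v) (x : E2) :
    pd 0 (pd 1 v) x = pd 1 (pd 0 v) x := by
  have hs : IsSymmSndFDerivAt ℝ v x := hv.contDiffAt.isSymmSndFDerivAt (by simp)
  have hd : DifferentiableAt ℝ (fderiv ℝ v) x :=
    ((hv.fderiv_right (m := 1) (by norm_num)).differentiable (by simp)) x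
  have key : ∀ i j : Fin 2, pd i (pd j v) x =
      fderiv ℝ (fderiv ℝ v) x (EuclideanSpace.single i 1) (EuclideanSpace.single j 1) := by
    intro i j
    unfold pd
    rw [fderiv_clm_apply hd (differentiableAt_const _)]
    simp
  rw [key, key]
  exact hs _ _

lemma pd_zero {η : E2 → ℝ} (i : Fin 2) {x : E2} (hx : x ∉ tsupport η) : pd i η x = 0 := by
  have : fderiv ℝ η x = 0 := by
    by_contra h
    exact hx (support_fderiv_subset ℝ h)
  simp [pd, this]

lemma eta_zero {η : E2 → ℝ} {x : E2} (hx : x ∉ tsupport η) : η x = 0 :=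
  image_eq_zero_of_notMem_tsupport hx

lemma intg {η F : E2 → ℝ} (hη : HasCompactSupport η) (hF : Continuous F)
    (h0 : ∀ x, x ∉ tsupport η → F x = 0) : Integrable F :=
  hF.integrable_of_hasCompactSupport (HasCompactSupport.intro hη h0)

lemma ibp {v φ : E2 → ℝ} (i : Fin 2) (hv : ContDiff ℝ 1 v) (hφ : ContDiff ℝ 1 φ)
    (hc : HasCompactSupport φ) :
    ∫ x, v x * pd i φ x = - ∫ x, pd i v x * φ x := by
  apply integral_mul_fderiv_eq_neg_fderiv_mul_of_integrable
  · exact intg hc ((pd_cont i hv).mul hφ.continuous) fun x hx => by simp [eta_zero hx]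
  · refine intg hc (hv.continuous.mul (pd_cont i hφ)) fun x hx => ?_
    have := pd_zero i hx
    simp only [pd] at this
    simp [this]
  · exact intg hc (hv.continuous.mul hφ.continuous) fun x hx => by simp [eta_zero hx]
  · exact fun x _ => hv.differentiable (by simp) x
  · exact fun x _ => hφ.differentiable (by simp) x

lemma ibp2 {G ψ : E2 → ℝ} (hG : ContDiff ℝ 1 G) (hψ : ContDiff ℝ 2 ψ)
    (hc : HasCompactSupport ψ) :
    ∫ x, pd 1 G x * pd 0 ψ x = ∫ x, pd 0 G x * pd 1 ψ x := by
  have hs : ∀ i, HasCompactSupport (pd i ψ) := fun i =>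
    HasCompactSupport.intro hc fun x hx => pd_zero i hx
  have h1 := ibp 1 hG (pd_contDiff (m := 1) 0 hψ (by norm_num)) (hs 0)
  have h0 := ibp 0 hG (pd_contDiff (m := 1) 1 hψ (by norm_num)) (hs 1)
  have : ∫ x, G x * pd 0 (pd 1 ψ) x = ∫ x, G x * pd 1 (pd 0 ψ) x := by
    simp_rw [pd_comm hψ]
  linarith

/-- the primitive -/
noncomputable def prim (a : ℝ → ℝ) (t : ℝ) : ℝ := ∫ r in (0:ℝ)..t, a r

lemma prim_deriv {a : ℝ → ℝ} (ha : Continuous a) (t : ℝ) : HasDerivAt (prim a) (a t) t :=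
  intervalIntegral.integral_hasDerivAt_right (ha.intervalIntegrable _ _)
    (ha.stronglyMeasurableAtFilter _ _) ha.continuousAt

lemma prim_contDiff {a : ℝ → ℝ} (ha : Continuous a) : ContDiff ℝ 1 (prim a) := by
  rw [contDiff_one_iff_deriv]
  refine ⟨fun t => (prim_deriv ha t).differentiableAt, ?_⟩
  rw [show deriv (prim a) = a from funext fun t => (prim_deriv ha t).deriv]
  exact ha

lemma prim_mono {a : ℝ → ℝ} (ha : Continuous a) (h0 : ∀ t, 0 ≤ a t) : Monotone (prim a) := by
  apply monotone_of_deriv_nonneg (fun t => (prim_deriv ha t).differentiableAt)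
  intro t
  rw [(prim_deriv ha t).deriv]
  exact h0 t

lemma prim_abs {a : ℝ → ℝ} {C : ℝ} (h0 : ∀ t, 0 ≤ a t)
    (hC : ∀ t, a t ≤ C * (1 + |t|)) (hCp : 0 ≤ C) (t : ℝ) :
    |prim a t| ≤ C * (1 + |t|) * |t| := by
  have := intervalIntegral.norm_integral_le_of_norm_le_const (a := 0) (b := t) (f := a)
    (C := C * (1 + |t|)) (by
      intro r hr
      rw [Real.norm_eq_abs, abs_of_nonneg (h0 r)]
      refine (hC r).trans ?_
      have : |r| ≤ |t| := by
        rcases Set.mem_uIoc.1 hr with h | h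
        · rw [abs_of_pos h.1, abs_of_pos (h.1.trans_le h.2)]; exact h.2
        · rw [abs_of_nonpos h.2, abs_of_neg (h.1.trans_le h.2)]; linarith
      gcongr)
  simpa [prim] using this

lemma prim_mul_nonneg {a : ℝ → ℝ} (ha : Continuous a) (h0 : ∀ t, 0 ≤ a t) (t : ℝ) :
    prim a t * t = |prim a t| * |t| := by
  have hz : prim a 0 = 0 := by simp [prim]
  rcases le_total 0 t with h | h
  · have := prim_mono ha h0 h
    rw [hz] at this
    rw [abs_of_nonneg this, abs_of_nonneg h]
  · have := prim_mono ha h0 h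
    rw [hz] at this
    rw [abs_of_nonpos this, abs_of_nonpos h]; ring

lemma prim_lower {a : ℝ → ℝ} {m : ℝ} (ha : Continuous a) (h0 : ∀ t, 0 ≤ a t)
    (hm0 : 0 ≤ m) (hm : ∀ t, |t| ≤ 1 → m ≤ a t) (t : ℝ) :
    m * (|t| - 1) ≤ prim a t * t := by
  rw [prim_mul_nonneg ha h0]
  rcases le_total |t| 1 with h | h
  · have : 0 ≤ |prim a t| * |t| := by positivity
    nlinarith
  · have hb : m ≤ |prim a t| := by
      rcases le_total 0 t with h' | h'
      · rw [abs_of_nonneg h'] at h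
        have h1 : m ≤ prim a 1 := by
          have := intervalIntegral.integral_mono_on (a := 0) (b := 1) (f := fun _ => m) (g := a)
            (by norm_num) (intervalIntegrable_const (μ := volume)) (ha.intervalIntegrable _ _)
            (fun x hx => hm x (by rw [abs_of_nonneg hx.1]; exact hx.2))
          simpa [prim] using this
        exact (h1.trans (prim_mono ha h0 h)).trans (le_abs_self _)
      · rw [abs_of_nonpos h'] at h
        have h1 : prim a (-1) ≤ -m := by
          have := intervalIntegral.integral_mono_on (a := -1) (b := 0) (f := fun _ => m) (g := a)
            (by norm_num) (intervalIntegrable_const (μ := volume)) (ha.intervalIntegrable _ _)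
            (fun x hx => hm x (by rw [abs_of_nonpos hx.2]; linarith [hx.1]))
          simp only [prim]
          rw [intervalIntegral.integral_symm]
          simp at this
          linarith
        have := prim_mono ha h0 (show t ≤ -1 by linarith)
        have := neg_abs_le (prim a t)
        linarith
    nlinarith [abs_nonneg t]

/-- power function -/
noncomputable def hfun (α t : ℝ) : ℝ := (1 + t ^ 2) ^ α * t

/-- derivative -/
noncomputable def hder (α t : ℝ) : ℝ := (1 + t ^ 2) ^ (α - 1) * (1 + (1 + 2 * α) * t ^ 2)

lemma one_add_sq_pos (t : ℝ) : 0 < 1 + t ^ 2 := by positivity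

lemma Gcont {n : ℕ∞ω} (α : ℝ) : ContDiff ℝ n fun t : ℝ => (1 + t ^ 2) ^ α :=
  (contDiff_const.add (contDiff_id.pow 2)).rpow_const_of_ne fun t => (one_add_sq_pos t).ne'

lemma hfun_contDiff {n : ℕ∞ω} (α : ℝ) : ContDiff ℝ n (hfun α) :=
  (Gcont α).mul contDiff_id

lemma hfun_deriv (α t : ℝ) : HasDerivAt (hfun α) (hder α t) t := by
  have h1 : HasDerivAt (fun t : ℝ => 1 + t ^ 2) (2 * t) t := by
    simpa using (hasDerivAt_pow 2 t).const_add 1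
  have h2 := (h1.rpow_const (p := α) (Or.inl (one_add_sq_pos t).ne')).mul (hasDerivAt_id t)
  refine h2.congr_deriv ?_
  have : (1 + t ^ 2) ^ α = (1 + t ^ 2) ^ (α - 1) * (1 + t ^ 2) := by
    rw [← Real.rpow_add_one (one_add_sq_pos t).ne']; simp
  simp only [hder, id]
  rw [this]
  ring

lemma hder_lower {α κ : ℝ} (h1 : κ ≤ 1) (h2 : κ ≤ 1 + 2 * α) (t : ℝ) :
    κ * (1 + t ^ 2) ^ α ≤ hder α t := by
  have : (1 + t ^ 2) ^ α = (1 + t ^ 2) ^ (α - 1) * (1 + t ^ 2) := by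
    rw [← Real.rpow_add_one (one_add_sq_pos t).ne']; simp
  rw [this, hder]
  have hp : 0 < (1 + t ^ 2) ^ (α - 1) := Real.rpow_pos_of_pos (one_add_sq_pos t) _
  have : κ * (1 + t ^ 2) ≤ 1 + (1 + 2 * α) * t ^ 2 := by nlinarith [sq_nonneg t]
  nlinarith

lemma hder_abs (α t : ℝ) : |hder α t| ≤ (1 + 2 * |α|) * (1 + t ^ 2) ^ α := by
  have : (1 + t ^ 2) ^ α = (1 + t ^ 2) ^ (α - 1) * (1 + t ^ 2) := by
    rw [← Real.rpow_add_one (one_add_sq_pos t).ne']; simp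
  rw [this, hder]
  have hp : 0 < (1 + t ^ 2) ^ (α - 1) := Real.rpow_pos_of_pos (one_add_sq_pos t) _
  rw [abs_mul, abs_of_pos hp]
  have : |1 + (1 + 2 * α) * t ^ 2| ≤ (1 + 2 * |α|) * (1 + t ^ 2) := by
    rw [abs_le]
    constructor <;> nlinarith [sq_nonneg t, neg_abs_le α, le_abs_self α, abs_nonneg α,
      mul_nonneg (abs_nonneg α) (sq_nonneg t), mul_le_mul_of_nonneg_right (le_abs_self α) (sq_nonneg t),  mul_le_mul_of_nonneg_right (neg_abs_le α) (sq_nonneg t)]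
  calc _ ≤ (1 + t ^ 2) ^ (α - 1) * ((1 + 2 * |α|) * (1 + t ^ 2)) := by gcongr
    _ = _ := by ring

lemma cacc_pt {A p e E H P Γ q v κ N : ℝ} (hA : 0 ≤ A) (hE : 0 ≤ E) (hP : 0 ≤ P) (hκ : 0 < κ)
    (hH : κ * P ≤ H) (hv : v ^ 2 ≤ Γ) :
    κ / 2 * (E * e ^ 2 * P * (A * p ^ 2)) - 2 * N ^ 2 / κ * (E * (P * Γ) * (A * q ^ 2)) ≤
      A * p * (E * e ^ 2 * (H * p) + 2 * N * (E * e) * q * (P * v)) := by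
  have h1 : 0 ≤ E * A * P * (κ / 2) * (e * p + 2 * N * (q * v) / κ) ^ 2 := by positivity
  have h2 : E * A * P * (κ / 2) * (e * p + 2 * N * (q * v) / κ) ^ 2 =
     κ / 2 * (E * e ^ 2 * P * (A * p ^ 2)) + A * p * (2 * N * (E * e) * q * (P * v)) +
       2 * N ^ 2 / κ * (E * (P * v ^ 2) * (A * q ^ 2)) := by
    field_simp
    ring
  have h3 : 2 * N ^ 2 / κ * (E * (P * v ^ 2) * (A * q ^ 2)) ≤
      2 * N ^ 2 / κ * (E * (P * Γ) * (A * q ^ 2)) := by gcongr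
  have h4 : A * p * (E * e ^ 2 * (κ * P * p)) ≤ A * p * (E * e ^ 2 * (H * p)) := by
    have : 0 ≤ (A * p ^ 2 * E * e ^ 2) * (H - κ * P) :=
      mul_nonneg (by positivity) (by linarith)
    nlinarith
  nlinarith

lemma pd_phi {η v : E2 → ℝ} {x : E2} (i : Fin 2) (α : ℝ) (n : ℕ) (hη : DifferentiableAt ℝ η x)
    (hv : DifferentiableAt ℝ v x) :
    pd i (fun y => η y ^ (2 * n + 2) * hfun α (v y)) x =
      η x ^ (2 * n) * η x ^ 2 * (hder α (v x) * pd i v x) +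
      2 * ((n : ℝ) + 1) * (η x ^ (2 * n) * η x) * pd i η x * ((1 + v x ^ 2) ^ α * v x) := by
  rw [pd_mul (v := fun y => η y ^ (2 * n + 2)) (w := fun y => hfun α (v y)) i (hη.pow _)
    (((hfun_deriv α (v x)).differentiableAt).comp x hv), pd_comp i hv (hfun_deriv α (v x)),
    pd_pow i (2 * n + 1) hη]
  simp only [hfun]
  push_cast
  ring

lemma cacc {a₁ a₂ : ℝ → ℝ} (ha₁ : Continuous a₁) (ha₂ : Continuous a₂) (h₁ : ∀ t, 0 ≤ a₁ t)
    (h₂ : ∀ t, 0 ≤ a₂ t) {u η : E2 → ℝ} (hu : ContDiff ℝ ∞ u) (hη : ContDiff ℝ ∞ η)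
    (hc : HasCompactSupport η)
    (heu : ∀ x ∈ tsupport η, a₁ (pd 0 u x) * pd 0 (pd 0 u) x
      + a₂ (pd 1 u x) * pd 1 (pd 1 u) x = 0) {α κ : ℝ} (hκ : 0 < κ) (hκ1 : κ ≤ 1)
    (hκ2 : κ ≤ 1 + 2 * α) (n : ℕ) :
    κ / 2 * ∫ x, η x ^ (2 * n) * η x ^ 2 * (1 + pd 0 u x ^ 2) ^ α *
        (a₁ (pd 0 u x) * pd 0 (pd 0 u) x ^ 2) ≤
      2 * ((n : ℝ) + 1) ^ 2 / κ * ∫ x, (η x ^ (2 * n) * (1 + pd 0 u x ^ 2) ^ (α + 1) *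
        (a₁ (pd 0 u x) * pd 0 η x ^ 2) + η x ^ (2 * n) * (1 + pd 0 u x ^ 2) ^ (α + 1) *
        (a₂ (pd 1 u x) * pd 1 η x ^ 2)) := by
  have hv : ContDiff ℝ ∞ (pd 0 u) := pd_smooth 0 hu
  have hw : ContDiff ℝ ∞ (pd 1 u) := pd_smooth 1 hu
  have hvi : ∀ i, Continuous (pd i (pd 0 u)) := fun i => (pd_smooth i hv).continuous
  have hwi : ∀ i, Continuous (pd i (pd 1 u)) := fun i => (pd_smooth i hw).continuous
  have hηi : ∀ i, Continuous (pd i η) := fun i => (pd_smooth i hη).continuous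
  have hηc := hη.continuous
  have hA : Continuous fun x => a₁ (pd 0 u x) := ha₁.comp hv.continuous
  have hB : Continuous fun x => a₂ (pd 1 u x) := ha₂.comp hw.continuous
  have hΓ : ∀ p : ℝ, Continuous fun x => (1 + pd 0 u x ^ 2) ^ p := fun p =>
    (Gcont (n := 0) p).continuous.comp hv.continuous
  set φ : E2 → ℝ := fun y => η y ^ (2 * n + 2) * hfun α (pd 0 u y) with hφ
  have hφs : ContDiff ℝ ∞ φ := (hη.pow _).mul ((hfun_contDiff α).comp hv)
  have hφc : HasCompactSupport φ := HasCompactSupport.intro hc fun x hx => by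
    simp [hφ, eta_zero hx]
  have hφi : ∀ i, Continuous (pd i φ) := fun i => (pd_smooth i hφs).continuous
  have hpd : ∀ i x, pd i φ x = _ := fun i x => pd_phi i α n
    (hη.differentiable (by simp) x) (hv.differentiable (by simp) x)
  have hφ0 : ∀ i x, x ∉ tsupport η → pd i φ x = 0 := by
    intro i x hx
    rw [hpd, eta_zero hx, pd_zero i hx]; simp
  set G : E2 → ℝ := fun x => prim a₂ (pd 1 u x) with hG
  have hGs : ContDiff ℝ 1 G := (prim_contDiff ha₂).comp (hw.of_le (mod_cast le_top))
  have hGi : ∀ i x, pd i G x = a₂ (pd 1 u x) * pd i (pd 1 u) x := fun i x =>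
    pd_comp i (hw.differentiable (by simp) x) (prim_deriv ha₂ _)
  have hib := ibp2 hGs (contDiff_infty.1 hφs 2) hφc
  have i1 : Integrable fun x => a₁ (pd 0 u x) * pd 0 (pd 0 u) x * pd 0 φ x :=
    intg hc ((hA.mul (hvi 0)).mul (hφi 0)) fun x hx => by simp [hφ0 0 x hx]
  have i2 : Integrable fun x => pd 1 G x * pd 0 φ x :=
    intg hc ((pd_cont 1 hGs).mul (hφi 0)) fun x hx => by simp [hφ0 0 x hx]
  have i3 : Integrable fun x => a₂ (pd 1 u x) * pd 1 (pd 0 u) x * pd 1 φ x :=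
    intg hc ((hB.mul (hvi 1)).mul (hφi 1)) fun x hx => by simp [hφ0 1 x hx]
  have e1 : (∫ x, a₁ (pd 0 u x) * pd 0 (pd 0 u) x * pd 0 φ x) + ∫ x, pd 1 G x * pd 0 φ x = 0 := by
    rw [← integral_add i1 i2]
    rw [← integral_zero E2 ℝ]
    congr 1
    ext x
    by_cases hx : x ∈ tsupport η
    · rw [← add_mul, hGi, heu x hx, zero_mul]
    · simp [hφ0 0 x hx]
  have e2 : ∫ x, pd 0 G x * pd 1 φ x =
      ∫ x, a₂ (pd 1 u x) * pd 1 (pd 0 u) x * pd 1 φ x := by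
    congr 1
    ext x
    rw [hGi, pd_comm (contDiff_infty.1 hu 2)]
  have e3 : ∫ x, (a₁ (pd 0 u x) * pd 0 (pd 0 u) x * pd 0 φ x +
      a₂ (pd 1 u x) * pd 1 (pd 0 u) x * pd 1 φ x) = 0 := by
    rw [integral_add i1 i3, ← e2, ← hib, e1]
  have j1 : Integrable fun x => η x ^ (2 * n) * η x ^ 2 * (1 + pd 0 u x ^ 2) ^ α *
        (a₁ (pd 0 u x) * pd 0 (pd 0 u) x ^ 2) :=
    intg hc ((((hηc.pow _).mul (hηc.pow _)).mul (hΓ α)).mul (hA.mul ((hvi 0).pow 2)))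
      fun x hx => by simp [eta_zero hx]
  have j2 : Integrable fun x => (η x ^ (2 * n) * (1 + pd 0 u x ^ 2) ^ (α + 1) *
        (a₁ (pd 0 u x) * pd 0 η x ^ 2) + η x ^ (2 * n) * (1 + pd 0 u x ^ 2) ^ (α + 1) *
        (a₂ (pd 1 u x) * pd 1 η x ^ 2)) :=
    intg hc ((((hηc.pow _).mul (hΓ (α + 1))).mul (hA.mul ((hηi 0).pow 2))).add
      (((hηc.pow _).mul (hΓ (α + 1))).mul (hB.mul ((hηi 1).pow 2))))
      fun x hx => by simp [pd_zero _ hx]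
  rw [← sub_nonpos, ← integral_const_mul, ← integral_const_mul, ← integral_sub
    (j1.const_mul _) (j2.const_mul _), ← e3]
  apply integral_mono ((j1.const_mul _).sub (j2.const_mul _)) (i1.add i3)
  intro x
  simp only [Pi.add_apply, Pi.sub_apply]
  rw [hpd, hpd]
  have hΓp := one_add_sq_pos (pd 0 u x)
  have hE : 0 ≤ η x ^ (2 * n) := by rw [pow_mul]; positivity
  have hP : 0 ≤ (1 + pd 0 u x ^ 2) ^ α := (Real.rpow_pos_of_pos hΓp _).le
  have hH := hder_lower hκ1 hκ2 (pd 0 u x)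
  have k0 := cacc_pt (A := a₁ (pd 0 u x)) (p := pd 0 (pd 0 u) x) (e := η x) (q := pd 0 η x)
    (v := pd 0 u x) (Γ := 1 + pd 0 u x ^ 2) (N := (n : ℝ) + 1) (h₁ _) hE hP hκ hH (by simp)
  have k1 := cacc_pt (A := a₂ (pd 1 u x)) (p := pd 1 (pd 0 u) x) (e := η x) (q := pd 1 η x)
    (v := pd 0 u x) (Γ := 1 + pd 0 u x ^ 2) (N := (n : ℝ) + 1) (h₂ _) hE hP hκ hH (by simp)
  rw [Real.rpow_add_one hΓp.ne']
  have : 0 ≤ κ / 2 * (η x ^ (2 * n) * η x ^ 2 * (1 + pd 0 u x ^ 2) ^ α *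
      (a₂ (pd 1 u x) * pd 1 (pd 0 u) x ^ 2)) := by
    have := h₂ (pd 1 u x)
    positivity
  linarith

lemma energy_pt {g t ψ C K z : ℝ} (hgt : g * t = |g| * |t|) (hg : |g| ≤ C * (1 + |t|) * |t|)
    (hC : 0 ≤ C) (hψ0 : 0 ≤ ψ) (hψ1 : ψ ≤ 1) (hz : |z| ≤ K) :
    1 / 2 * (ψ ^ 3 * (g * t)) - K * C * ((1 + 2 * K) * (2 * K)) ≤
      ψ ^ 3 * (g * t) + ψ ^ 2 * (z * g) := by
  have hK : 0 ≤ K := (abs_nonneg z).trans hz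
  have h1 : -(K * |g|) ≤ z * g := by
    have : |z * g| ≤ K * |g| := by rw [abs_mul]; gcongr
    linarith [neg_abs_le (z * g)]
  have h2 : ψ ^ 2 * (K * |g|) ≤ 1 / 2 * (ψ ^ 3 * (|g| * |t|)) + K * C * ((1 + 2 * K) * (2 * K)) := by
    rcases le_total (2 * K) (ψ * |t|) with h | h
    · have : 0 ≤ K * C * ((1 + 2 * K) * (2 * K)) := by positivity
      have : 0 ≤ ψ ^ 2 * |g| * (ψ * |t| - 2 * K) := mul_nonneg (by positivity) (by linarith)
      nlinarith
    · have : 0 ≤ 1 / 2 * (ψ ^ 3 * (|g| * |t|)) := by positivity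
      have : ψ ^ 2 * (K * |g|) ≤ K * C * ((1 + 2 * K) * (2 * K)) := by
        calc ψ ^ 2 * (K * |g|) ≤ ψ ^ 2 * (K * (C * (1 + |t|) * |t|)) := by gcongr
          _ = K * C * ((ψ + ψ * |t|) * (ψ * |t|)) := by ring
          _ ≤ _ := by gcongr
      linarith
  have h3 : ψ ^ 2 * (-(K * |g|)) ≤ ψ ^ 2 * (z * g) := by gcongr
  rw [hgt] at *
  linarith

lemma energy {a₁ a₂ : ℝ → ℝ} (ha₁ : Continuous a₁) (ha₂ : Continuous a₂) (h₁ : ∀ t, 0 ≤ a₁ t)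
    (h₂ : ∀ t, 0 ≤ a₂ t) {C m M B : ℝ} (hC : 0 ≤ C) (hm : 0 < m)
    (hC₁ : ∀ t, a₁ t ≤ C * (1 + |t|)) (hC₂ : ∀ t, a₂ t ≤ C * (1 + |t|))
    (hm₂ : ∀ t, |t| ≤ 1 → m ≤ a₂ t)
    {u ψ : E2 → ℝ} (hu : ContDiff ℝ ∞ u) (hψ : ContDiff ℝ ∞ ψ)
    (hc : HasCompactSupport ψ) (hψ0 : ∀ x, 0 ≤ ψ x) (hψ1 : ∀ x, ψ x ≤ 1)
    (hM : ∀ x ∈ tsupport ψ, |u x| ≤ M) (hB : ∀ i x, |pd i ψ x| ≤ B)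
    (heu : ∀ x ∈ tsupport ψ, a₁ (pd 0 u x) * pd 0 (pd 0 u) x
      + a₂ (pd 1 u x) * pd 1 (pd 1 u) x = 0) {K : ℝ} (hK : K = 3 * (M * B)) :
    m / 2 * ∫ x, ψ x ^ 3 * |pd 1 u x| ≤
      (m / 2 + 2 * (K * C * ((1 + 2 * K) * (2 * K)))) * volume.real (tsupport ψ) := by
  set D := K * C * ((1 + 2 * K) * (2 * K)) with hD
  have hpu : ∀ i, ContDiff ℝ ∞ (pd i u) := fun i => pd_smooth i hu
  have hψi : ∀ i, Continuous (pd i ψ) := fun i => (pd_smooth i hψ).continuous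
  set φ : E2 → ℝ := fun y => u y * ψ y ^ 3 with hφ
  have hφs : ContDiff ℝ ∞ φ := hu.mul (hψ.pow _)
  have hφc : HasCompactSupport φ := HasCompactSupport.intro hc fun x hx => by
    simp [hφ, eta_zero hx]
  have hφi : ∀ i, Continuous (pd i φ) := fun i => (pd_smooth i hφs).continuous
  have hpd : ∀ i x, pd i φ x = u x * (3 * ψ x ^ 2 * pd i ψ x) + pd i u x * ψ x ^ 3 := by
    intro i x
    rw [hφ, pd_mul (w := fun y => ψ y ^ 3) i (hu.differentiable (by simp) x) ((hψ.differentiable (by simp) x).pow 3),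
      pd_pow i 2 (hψ.differentiable (by simp) x)]
    norm_num
  have hφ0 : ∀ i x, x ∉ tsupport ψ → pd i φ x = 0 := by
    intro i x hx
    rw [hpd, eta_zero hx]; simp
  have hgs : ∀ (a : ℝ → ℝ) (i : Fin 2), Continuous a →
      ContDiff ℝ 1 (fun x => prim a (pd i u x)) := fun a i ha =>
    (prim_contDiff ha).comp ((hpu i).of_le (mod_cast le_top))
  have hgi : ∀ (a : ℝ → ℝ) (i j : Fin 2), Continuous a → ∀ x,
      pd j (fun x => prim a (pd i u x)) x = a (pd i u x) * pd j (pd i u) x :=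
    fun a i j ha x => pd_comp j ((hpu i).differentiable (by simp) x) (prim_deriv ha _)
  have b0 := ibp 0 (hgs a₁ 0 ha₁) (hφs.of_le (mod_cast le_top)) hφc
  have b1 := ibp 1 (hgs a₂ 1 ha₂) (hφs.of_le (mod_cast le_top)) hφc
  have i0 : Integrable fun x => prim a₁ (pd 0 u x) * pd 0 φ x :=
    intg hc ((hgs a₁ 0 ha₁).continuous.mul (hφi 0)) fun x hx => by simp [hφ0 0 x hx]
  have i1 : Integrable fun x => prim a₂ (pd 1 u x) * pd 1 φ x :=
    intg hc ((hgs a₂ 1 ha₂).continuous.mul (hφi 1)) fun x hx => by simp [hφ0 1 x hx]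
  have j0 : Integrable fun x => pd 0 (fun x => prim a₁ (pd 0 u x)) x * φ x :=
    intg hc ((pd_cont 0 (hgs a₁ 0 ha₁)).mul hφs.continuous) fun x hx => by
      simp [hφ, eta_zero hx]
  have j1 : Integrable fun x => pd 1 (fun x => prim a₂ (pd 1 u x)) x * φ x :=
    intg hc ((pd_cont 1 (hgs a₂ 1 ha₂)).mul hφs.continuous) fun x hx => by
      simp [hφ, eta_zero hx]
  have e0 : (∫ x, pd 0 (fun x => prim a₁ (pd 0 u x)) x * φ x) +
      ∫ x, pd 1 (fun x => prim a₂ (pd 1 u x)) x * φ x = 0 := by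
    rw [← integral_add j0 j1, ← integral_zero E2 ℝ]
    congr 1
    ext x
    by_cases hx : x ∈ tsupport ψ
    · rw [← add_mul, hgi a₁ 0 0 ha₁, hgi a₂ 1 1 ha₂, heu x hx, zero_mul]
    · simp [hφ, eta_zero hx]
  have e1 : ∫ x, (prim a₁ (pd 0 u x) * pd 0 φ x + prim a₂ (pd 1 u x) * pd 1 φ x) = 0 := by
    rw [integral_add i0 i1, b0, b1]
    linarith
  have k0 : Integrable fun x => ψ x ^ 3 * |pd 1 u x| :=
    intg hc ((hψ.continuous.pow 3).mul (hpu 1).continuous.abs) fun x hx => by simp [eta_zero hx]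
  have hSm : MeasurableSet (tsupport ψ) := (isClosed_tsupport ψ).measurableSet
  have k1 : Integrable ((tsupport ψ).indicator fun _ : E2 => m / 2 + 2 * D) := by
    rw [integrable_indicator_iff hSm]
    exact integrableOn_const hc.isCompact.measure_lt_top.ne
  have e2 : ∫ x, (tsupport ψ).indicator (fun _ : E2 => m / 2 + 2 * D) x =
      (m / 2 + 2 * D) * volume.real (tsupport ψ) := by
    rw [integral_indicator hSm, setIntegral_const, smul_eq_mul, mul_comm]
  rw [← e2, ← sub_nonpos, ← integral_const_mul, ← integral_sub (k0.const_mul _) k1, ← e1]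
  apply integral_mono ((k0.const_mul _).sub k1) (i0.add i1)
  intro x
  simp only [Pi.sub_apply, Pi.add_apply]
  by_cases hx : x ∈ tsupport ψ
  · rw [Set.indicator_of_mem hx, hpd, hpd]
    have hz : ∀ i, |3 * (u x * pd i ψ x)| ≤ K := by
      intro i
      rw [abs_mul, abs_mul, hK, abs_of_pos (by norm_num : (0:ℝ) < 3)]
      have := hM x hx
      have := hB i x
      have : 0 ≤ M := (abs_nonneg _).trans (hM x hx)
      gcongr
    have l0 := energy_pt (prim_mul_nonneg ha₁ h₁ (pd 0 u x)) (prim_abs h₁ hC₁ hC _) hC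
      (hψ0 x) (hψ1 x) (hz 0)
    have l1 := energy_pt (prim_mul_nonneg ha₂ h₂ (pd 1 u x)) (prim_abs h₂ hC₂ hC _) hC
      (hψ0 x) (hψ1 x) (hz 1)
    have l2 := prim_lower ha₂ h₂ hm.le hm₂ (pd 1 u x)
    have l3 : 0 ≤ prim a₁ (pd 0 u x) * pd 0 u x := by
      rw [prim_mul_nonneg ha₁ h₁]; positivity
    have hp3 : 0 ≤ ψ x ^ 3 := pow_nonneg (hψ0 x) 3
    have hp31 : ψ x ^ 3 ≤ 1 := pow_le_one₀ (hψ0 x) (hψ1 x)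
    have l4 := mul_le_mul_of_nonneg_left l2 hp3
    have l5 := mul_nonneg hp3 l3
    have l6 : m * ψ x ^ 3 ≤ m * 1 := by gcongr
    rw [← hD] at l0 l1
    nlinarith
  · rw [Set.indicator_of_notMem hx, hφ0 0 x hx, hφ0 1 x hx, eta_zero hx]
    simp

lemma int_le3 {f f1 f2 f3 : E2 → ℝ} {k1 k2 k3 : ℝ} (hf : Integrable f) (h1 : Integrable f1)
    (h2 : Integrable f2) (h3 : Integrable f3)
    (h : ∀ x, f x ≤ k1 * f1 x + k2 * f2 x + k3 * f3 x) :
    ∫ x, f x ≤ k1 * (∫ x, f1 x) + k2 * (∫ x, f2 x) + k3 * ∫ x, f3 x := by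
  have h12 : Integrable fun x => k1 * f1 x + k2 * f2 x := (h1.const_mul _).add (h2.const_mul _)
  rw [← integral_const_mul, ← integral_const_mul, ← integral_const_mul,
    ← integral_add (h1.const_mul _) (h2.const_mul _), ← integral_add h12 (h3.const_mul _)]
  exact integral_mono hf (h12.add (h3.const_mul _)) h

lemma amgm {a y z : ℝ} (hy : 0 ≤ y) (hz : 0 ≤ z) (h : a ^ 2 ≤ y * z) : a ≤ (y + z) / 2 := by
  have : a ^ 2 ≤ ((y + z) / 2) ^ 2 := by nlinarith [sq_nonneg (y - z)]
  exact (le_abs_self a).trans (abs_le_of_sq_le_sq this (by positivity))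

lemma stepA_pt {v p e q E Γ s α μ M N c3 A H U : ℝ} (hΓ : Γ = 1 + v ^ 2) (hE : 0 ≤ E)
    (he : 0 ≤ e) (hμ : 0 ≤ μ) (hc3 : 0 < c3) (hA : c3 * Γ ^ (-(μ / 2)) ≤ A) (hU : |U| ≤ M)
    (hN : 0 ≤ N) (hH : |H| ≤ (1 + 2 * |s|) * Γ ^ s) :
    -(U * (E * e ^ 2 * (H * p) + 2 * N * (E * e) * q * (Γ ^ s * v))) ≤
      (M * (1 + 2 * |s|) / 2 + M * N) * (E * e ^ 2 * Γ ^ (2 * s - α + μ / 2)) +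
      M * (1 + 2 * |s|) / 2 / c3 * (E * e ^ 2 * Γ ^ α * (A * p ^ 2)) +
      M * N * (E * Γ ^ (α + 1) * q ^ 2) := by
  have hM : 0 ≤ M := (abs_nonneg U).trans hU
  have hΓ1 : 1 ≤ Γ := by rw [hΓ]; nlinarith [sq_nonneg v]
  have hΓp : 0 < Γ := by linarith
  have hX := Real.rpow_pos_of_pos hΓp s
  have hY := Real.rpow_pos_of_pos hΓp (2 * s - α + μ / 2)
  have hZ := Real.rpow_pos_of_pos hΓp (α - μ / 2)
  have hP := Real.rpow_pos_of_pos hΓp α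
  have hQ := Real.rpow_pos_of_pos hΓp (α + 1)
  have hXX : (Γ ^ s) ^ 2 = Γ ^ (2 * s) := by
    rw [← Real.rpow_mul_natCast hΓp.le]; congr 1; push_cast; ring
  have hYZ : (Γ ^ s) ^ 2 = Γ ^ (2 * s - α + μ / 2) * Γ ^ (α - μ / 2) := by
    rw [hXX, ← Real.rpow_add hΓp]; congr 1; ring
  have hYQ : (Γ ^ s) ^ 2 * v ^ 2 ≤ Γ ^ (2 * s - α + μ / 2) * Γ ^ (α + 1) := by
    rw [hXX, ← Real.rpow_add hΓp]
    calc Γ ^ (2 * s) * v ^ 2 ≤ Γ ^ (2 * s) * Γ := by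
            have := Real.rpow_pos_of_pos hΓp (2 * s)
            gcongr; rw [hΓ]; linarith
      _ = Γ ^ (2 * s + 1) := by rw [Real.rpow_add_one hΓp.ne']
      _ ≤ _ := Real.rpow_le_rpow_of_exponent_le hΓ1 (by linarith)
  have hZA : c3 * Γ ^ (α - μ / 2) ≤ Γ ^ α * A := by
    rw [sub_eq_add_neg, Real.rpow_add hΓp]
    nlinarith
  set X := Γ ^ s
  set Y := Γ ^ (2 * s - α + μ / 2)
  set Z := Γ ^ (α - μ / 2)
  set P := Γ ^ α
  set Q := Γ ^ (α + 1)
  have hZA' : Z ≤ P * A / c3 := by rw [le_div_iff₀ hc3]; linarith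
  have k1 : X * |p| ≤ (Y + P * A / c3 * p ^ 2) / 2 := by
    have : X * |p| ≤ (Y + Z * p ^ 2) / 2 := by
      apply amgm hY.le (by positivity)
      rw [mul_pow, sq_abs, hYZ]; apply le_of_eq; ring
    have : Z * p ^ 2 ≤ P * A / c3 * p ^ 2 := by gcongr
    linarith
  have k2 : e * |q| * (X * |v|) ≤ (e ^ 2 * Y + Q * q ^ 2) / 2 := by
    apply amgm (by positivity) (by positivity)
    calc (e * |q| * (X * |v|)) ^ 2 = e ^ 2 * q ^ 2 * (X ^ 2 * v ^ 2) := by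
            rw [mul_pow, mul_pow, mul_pow, sq_abs, sq_abs]
      _ ≤ e ^ 2 * q ^ 2 * (Y * Q) := by gcongr
      _ = _ := by ring
  calc -(U * (E * e ^ 2 * (H * p) + 2 * N * (E * e) * q * (X * v)))
      ≤ |U * (E * e ^ 2 * (H * p) + 2 * N * (E * e) * q * (X * v))| := neg_le_abs _
    _ ≤ M * (E * e ^ 2 * (|H| * |p|) + 2 * N * (E * e) * |q| * (X * |v|)) := by
        rw [abs_mul]
        gcongr
        refine (abs_add_le _ _).trans ?_
        simp only [abs_mul, abs_of_nonneg hE, abs_of_nonneg he, abs_of_nonneg hN,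
          abs_of_pos hX, abs_pow, abs_two]
        exact le_rfl
    _ ≤ M * (E * e ^ 2 * ((1 + 2 * |s|) * X * |p|) + 2 * N * (E * e) * |q| * (X * |v|)) := by
        gcongr
    _ = M * (1 + 2 * |s|) * (E * e ^ 2) * (X * |p|) + 2 * M * N * E * (e * |q| * (X * |v|)) := by
        ring
    _ ≤ M * (1 + 2 * |s|) * (E * e ^ 2) * ((Y + P * A / c3 * p ^ 2) / 2) +
        2 * M * N * E * ((e ^ 2 * Y + Q * q ^ 2) / 2) := by gcongr
    _ = _ := by field_simp; ring

lemma gam_split {v s : ℝ} (hs : 0 ≤ s + 1) :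
    (1 + v ^ 2) ^ (s + 1) ≤ 2 * (v * hfun s v) + 2 ^ (s + 1) := by
  have hΓp := one_add_sq_pos v
  have hX := Real.rpow_pos_of_pos hΓp s
  have h2 : (0:ℝ) < 2 ^ (s + 1) := by positivity
  simp only [hfun]
  rcases le_total 1 (v ^ 2) with h | h
  · rw [Real.rpow_add_one hΓp.ne']
    nlinarith
  · have : (1 + v ^ 2) ^ (s + 1) ≤ 2 ^ (s + 1) :=
      Real.rpow_le_rpow hΓp.le (by linarith) hs
    have : 0 ≤ v * ((1 + v ^ 2) ^ s * v) := by
      have : v * ((1 + v ^ 2) ^ s * v) = (1 + v ^ 2) ^ s * v ^ 2 := by ring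
      rw [this]; positivity
    linarith

lemma stepA {a₁ : ℝ → ℝ} (ha₁ : Continuous a₁) {u η : E2 → ℝ} (hu : ContDiff ℝ ∞ u)
    (hη : ContDiff ℝ ∞ η) (hc : HasCompactSupport η) (hη0 : ∀ x, 0 ≤ η x)
    {M : ℝ} (hM : ∀ x ∈ tsupport η, |u x| ≤ M) {s α μ c3 : ℝ} (hs : 0 ≤ s + 1) (hμ : 0 ≤ μ)
    (hc3 : 0 < c3) (hA : ∀ t : ℝ, c3 * (1 + t ^ 2) ^ (-(μ / 2)) ≤ a₁ t) (n : ℕ) :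
    ∫ x, η x ^ (2 * n) * η x ^ 2 * (1 + pd 0 u x ^ 2) ^ (s + 1) ≤
      2 * ((M * (1 + 2 * |s|) / 2 + M * ((n : ℝ) + 1)) *
          (∫ x, η x ^ (2 * n) * η x ^ 2 * (1 + pd 0 u x ^ 2) ^ (2 * s - α + μ / 2)) +
        M * (1 + 2 * |s|) / 2 / c3 * (∫ x, η x ^ (2 * n) * η x ^ 2 * (1 + pd 0 u x ^ 2) ^ α *
          (a₁ (pd 0 u x) * pd 0 (pd 0 u) x ^ 2)) +
        M * ((n : ℝ) + 1) * ∫ x, η x ^ (2 * n) * (1 + pd 0 u x ^ 2) ^ (α + 1) * pd 0 η x ^ 2) +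
      2 ^ (s + 1) * ∫ x, η x ^ (2 * n) * η x ^ 2 := by
  have hv : ContDiff ℝ ∞ (pd 0 u) := pd_smooth 0 hu
  have hvi : ∀ i, Continuous (pd i (pd 0 u)) := fun i => (pd_smooth i hv).continuous
  have hηi : ∀ i, Continuous (pd i η) := fun i => (pd_smooth i hη).continuous
  have hηc := hη.continuous
  have hAc : Continuous fun x => a₁ (pd 0 u x) := ha₁.comp hv.continuous
  have hΓ : ∀ p : ℝ, Continuous fun x => (1 + pd 0 u x ^ 2) ^ p := fun p =>
    (Gcont (n := 0) p).continuous.comp hv.continuous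
  have hηn : Continuous fun x => η x ^ (2 * n) * η x ^ 2 := (hηc.pow _).mul (hηc.pow _)
  set φ : E2 → ℝ := fun y => η y ^ (2 * n + 2) * hfun s (pd 0 u y) with hφ
  have hφs : ContDiff ℝ ∞ φ := (hη.pow _).mul ((hfun_contDiff s).comp hv)
  have hφc : HasCompactSupport φ := HasCompactSupport.intro hc fun x hx => by
    simp [hφ, eta_zero hx]
  have hφi : ∀ i, Continuous (pd i φ) := fun i => (pd_smooth i hφs).continuous
  have hpd : ∀ i x, pd i φ x = _ := fun i x => pd_phi i s n
    (hη.differentiable (by simp) x) (hv.differentiable (by simp) x)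
  have hφ0 : ∀ i x, x ∉ tsupport η → pd i φ x = 0 := by
    intro i x hx
    rw [hpd, eta_zero hx, pd_zero i hx]; simp
  have hib := ibp 0 (hu.of_le (mod_cast le_top)) (hφs.of_le (mod_cast le_top)) hφc
  have t0 : Integrable fun x => pd 0 u x * φ x :=
    intg hc (hv.continuous.mul hφs.continuous) fun x hx => by simp [hφ, eta_zero hx]
  have t0' : Integrable fun x => u x * pd 0 φ x :=
    intg hc (hu.continuous.mul (hφi 0)) fun x hx => by simp [hφ0 0 x hx]
  have t1 : Integrable fun x => η x ^ (2 * n) * η x ^ 2 * (1 + pd 0 u x ^ 2) ^ (2 * s - α + μ / 2) :=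
    intg hc (hηn.mul (hΓ _)) fun x hx => by simp [eta_zero hx]
  have t2 : Integrable fun x => η x ^ (2 * n) * η x ^ 2 * (1 + pd 0 u x ^ 2) ^ α *
          (a₁ (pd 0 u x) * pd 0 (pd 0 u) x ^ 2) :=
    intg hc ((hηn.mul (hΓ _)).mul (hAc.mul ((hvi 0).pow 2))) fun x hx => by simp [eta_zero hx]
  have t3 : Integrable fun x => η x ^ (2 * n) * (1 + pd 0 u x ^ 2) ^ (α + 1) * pd 0 η x ^ 2 :=
    intg hc (((hηc.pow _).mul (hΓ _)).mul ((hηi 0).pow 2)) fun x hx => by simp [pd_zero _ hx]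
  have t4 : Integrable fun x => η x ^ (2 * n) * η x ^ 2 :=
    intg hc hηn fun x hx => by simp [eta_zero hx]
  have t5 : Integrable fun x => η x ^ (2 * n) * η x ^ 2 * (1 + pd 0 u x ^ 2) ^ (s + 1) :=
    intg hc (hηn.mul (hΓ _)) fun x hx => by simp [eta_zero hx]
  have s1 : ∫ x, η x ^ (2 * n) * η x ^ 2 * (1 + pd 0 u x ^ 2) ^ (s + 1) ≤
      2 * (∫ x, pd 0 u x * φ x) + 2 ^ (s + 1) * ∫ x, η x ^ (2 * n) * η x ^ 2 := by
    rw [← integral_const_mul, ← integral_const_mul, ← integral_add (t0.const_mul _)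
      (t4.const_mul _)]
    apply integral_mono t5 ((t0.const_mul _).add (t4.const_mul _))
    intro x
    simp only [hφ, Pi.add_apply]
    have hE : 0 ≤ η x ^ (2 * n) * η x ^ 2 :=
      mul_nonneg (pow_nonneg (hη0 x) _) (pow_nonneg (hη0 x) _)
    have := mul_le_mul_of_nonneg_left (gam_split (v := pd 0 u x) hs) hE
    refine this.trans (le_of_eq ?_)
    ring
  have s2 : ∫ x, pd 0 u x * φ x = ∫ x, -(u x * pd 0 φ x) := by
    rw [integral_neg, hib, neg_neg]
  have s3 : ∫ x, -(u x * pd 0 φ x) ≤ (M * (1 + 2 * |s|) / 2 + M * ((n : ℝ) + 1)) *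
          (∫ x, η x ^ (2 * n) * η x ^ 2 * (1 + pd 0 u x ^ 2) ^ (2 * s - α + μ / 2)) +
        M * (1 + 2 * |s|) / 2 / c3 * (∫ x, η x ^ (2 * n) * η x ^ 2 * (1 + pd 0 u x ^ 2) ^ α *
          (a₁ (pd 0 u x) * pd 0 (pd 0 u) x ^ 2)) +
        M * ((n : ℝ) + 1) * ∫ x, η x ^ (2 * n) * (1 + pd 0 u x ^ 2) ^ (α + 1) * pd 0 η x ^ 2 := by
    apply int_le3 t0'.neg t1 t2 t3
    intro x
    simp only [Pi.neg_apply]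
    by_cases hx : x ∈ tsupport η
    · rw [hpd]
      exact stepA_pt rfl (pow_nonneg (hη0 x) _) (hη0 x) hμ hc3 (hA _) (hM x hx) (by positivity)
        (hder_abs _ _)
    · simp [hφ0 0 x hx, eta_zero hx, pd_zero _ hx]
  linarith

lemma young_g {γ y Γ b : ℝ} (hγ0 : 0 ≤ γ) (hγ1 : γ < 1) (hy : 0 ≤ y) (hΓ : 0 < Γ) :
    y ^ γ * Γ ^ b ≤ y + Γ ^ (b / (1 - γ)) := by
  have h1 : 0 < 1 - γ := by linarith
  have hR := Real.rpow_pos_of_pos hΓ (b / (1 - γ))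
  have h := Real.geom_mean_le_arith_mean2_weighted hγ0 h1.le hy hR.le (by ring)
  rw [← Real.rpow_mul hΓ.le, div_mul_cancel₀ _ h1.ne'] at h
  nlinarith

lemma stepB_pt {A D C E Q R W q0 q1 B P Wg : ℝ} (hA : A ≤ C) (hD : D ≤ C * Wg) (hC : 0 ≤ C)
    (hE : 0 ≤ E) (hQ : 0 ≤ Q) (hR : 0 ≤ R) (hW : 0 ≤ W)
    (hy : Wg * Q ≤ W + R) (hB : E * q1 ^ 2 ≤ B * P) :
    E * Q * (A * q0 ^ 2) + E * Q * (D * q1 ^ 2) ≤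
      C * ((q0 ^ 2 + q1 ^ 2) * E * Q) + C * ((q0 ^ 2 + q1 ^ 2) * E * R) + C * B * (P * W) := by
  have k1 : E * Q * (A * q0 ^ 2) ≤ E * Q * (C * q0 ^ 2) := by gcongr
  have k2 : E * Q * (D * q1 ^ 2) ≤ E * Q * (C * Wg * q1 ^ 2) := by gcongr
  have k3 : C * (E * q1 ^ 2) * (Wg * Q) ≤ C * (E * q1 ^ 2) * (W + R) := by gcongr
  have k4 : C * W * (E * q1 ^ 2) ≤ C * W * (B * P) := by gcongr
  have k5 : 0 ≤ C * (q1 ^ 2 * E * Q) := by positivity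
  have k6 : 0 ≤ C * (q0 ^ 2 * E * R) := by positivity
  nlinarith

lemma stepB {a₁ a₂ : ℝ → ℝ} (ha₁ : Continuous a₁) (ha₂ : Continuous a₂)
    {u η ψ : E2 → ℝ} (hu : ContDiff ℝ ∞ u)
    (hη : ContDiff ℝ ∞ η) (hc : HasCompactSupport η) (hη0 : ∀ x, 0 ≤ η x) (hη1 : ∀ x, η x ≤ 1)
    (hψ : Continuous ψ) (hψc : HasCompactSupport ψ) (hψ0 : ∀ x, 0 ≤ ψ x)
    (hψη : ∀ x ∈ tsupport η, ψ x = 1) {B C α γ : ℝ} (hB : ∀ i x, |pd i η x| ≤ B) (hC : 0 ≤ C)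
    (hγ0 : 0 ≤ γ) (hγ1 : γ < 1)
    (hC₁ : ∀ t, a₁ t ≤ C) (hC₂ : ∀ t, a₂ t ≤ C * (1 + |t|) ^ γ) (n : ℕ) :
    ∫ x, (η x ^ (2 * n) * (1 + pd 0 u x ^ 2) ^ (α + 1) *
        (a₁ (pd 0 u x) * pd 0 η x ^ 2) + η x ^ (2 * n) * (1 + pd 0 u x ^ 2) ^ (α + 1) *
        (a₂ (pd 1 u x) * pd 1 η x ^ 2)) ≤
      C * (∫ x, (pd 0 η x ^ 2 + pd 1 η x ^ 2) * η x ^ (2 * n) * (1 + pd 0 u x ^ 2) ^ (α + 1)) +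
      C * (∫ x, (pd 0 η x ^ 2 + pd 1 η x ^ 2) * η x ^ (2 * n) *
        (1 + pd 0 u x ^ 2) ^ ((α + 1) / (1 - γ))) +
      C * B ^ 2 * ∫ x, ψ x ^ 3 * (1 + |pd 1 u x|) := by
  have hv : ContDiff ℝ ∞ (pd 0 u) := pd_smooth 0 hu
  have hw : ContDiff ℝ ∞ (pd 1 u) := pd_smooth 1 hu
  have hηi : ∀ i, Continuous (pd i η) := fun i => (pd_smooth i hη).continuous
  have hηc := hη.continuous
  have hAc : Continuous fun x => a₁ (pd 0 u x) := ha₁.comp hv.continuous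
  have hBc : Continuous fun x => a₂ (pd 1 u x) := ha₂.comp hw.continuous
  have hΓ : ∀ p : ℝ, Continuous fun x => (1 + pd 0 u x ^ 2) ^ p := fun p =>
    (Gcont (n := 0) p).continuous.comp hv.continuous
  have hgr : Continuous fun x => (pd 0 η x ^ 2 + pd 1 η x ^ 2) * η x ^ (2 * n) :=
    (((hηi 0).pow 2).add ((hηi 1).pow 2)).mul (hηc.pow _)
  apply int_le3
  · exact intg hc ((((hηc.pow _).mul (hΓ (α + 1))).mul (hAc.mul ((hηi 0).pow 2))).add
      (((hηc.pow _).mul (hΓ (α + 1))).mul (hBc.mul ((hηi 1).pow 2))))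
      fun x hx => by simp [pd_zero _ hx]
  · exact intg hc (hgr.mul (hΓ _)) fun x hx => by simp [pd_zero _ hx]
  · exact intg hc (hgr.mul (hΓ _)) fun x hx => by simp [pd_zero _ hx]
  · exact intg hψc ((hψ.pow 3).mul (continuous_const.add hw.continuous.abs))
      fun x hx => by simp [eta_zero hx]
  intro x
  have hΓp := one_add_sq_pos (pd 0 u x)
  apply stepB_pt (hC₁ _) (hC₂ _) hC (pow_nonneg (hη0 x) _) (Real.rpow_pos_of_pos hΓp _).le
    (Real.rpow_pos_of_pos hΓp _).le (by positivity) (young_g hγ0 hγ1 (by positivity) hΓp)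
  by_cases hx : x ∈ tsupport η
  · rw [hψη x hx]
    have h1 : η x ^ (2 * n) ≤ 1 := pow_le_one₀ (hη0 x) (hη1 x)
    have h2 : pd 1 η x ^ 2 ≤ B ^ 2 := by
      rw [← sq_abs]; exact pow_le_pow_left₀ (abs_nonneg _) (hB 1 x) 2
    have h3 : 0 ≤ η x ^ (2 * n) := pow_nonneg (hη0 x) _
    nlinarith [sq_nonneg (pd 1 η x)]
  · rw [pd_zero 1 hx]
    have := hψ0 x
    simp; positivity

lemma exists_bound {η : E2 → ℝ} (hη : ContDiff ℝ ∞ η) (hc : HasCompactSupport η) :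
    ∃ B : ℝ, 0 ≤ B ∧ ∀ i x, |pd i η x| ≤ B := by
  have h : ∀ i, ∃ C, ∀ x, ‖pd i η x‖ ≤ C := fun i =>
    (HasCompactSupport.intro hc fun x hx => pd_zero i hx).exists_bound_of_continuous
      (pd_smooth i hη).continuous
  choose C hC using h
  refine ⟨max (C 0) (C 1), ((norm_nonneg _).trans (hC 0 0)).trans (le_max_left _ _), ?_⟩
  intro i x
  have := hC i x
  fin_cases i
  · exact this.trans (le_max_left _ _)
  · exact this.trans (le_max_right _ _)

lemma exists_cutoff {K Ω : Set E2} (hK : IsCompact K) (hΩ : IsOpen Ω) (h : K ⊆ Ω) :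
    ∃ ψ : E2 → ℝ, ContDiff ℝ ∞ ψ ∧ HasCompactSupport ψ ∧ tsupport ψ ⊆ Ω ∧ (∀ x, 0 ≤ ψ x) ∧
      (∀ x, ψ x ≤ 1) ∧ ∀ x ∈ K, ψ x = 1 := by
  obtain ⟨L, hL, hKL, hLΩ⟩ := exists_compact_between hK hΩ h
  obtain ⟨f, h1, h0, hf⟩ := exists_contMDiffMap_one_nhds_of_subset_interior (n := (⊤ : ℕ∞))
    (modelWithCornersSelf ℝ E2) hK.isClosed hKL
  have hs : tsupport f ⊆ L := by
    apply closure_minimal _ hL.isClosed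
    intro x hx
    by_contra hxL
    exact hx (h0 x hxL)
  refine ⟨f, f.contMDiff.contDiff, HasCompactSupport.intro hL h0, hs.trans hLΩ,
    fun x => (hf x).1, fun x => (hf x).2, fun x hx => ?_⟩
  exact h1.self_of_nhdsSet x hx

lemma lower_gam {t μ c : ℝ} (hμ : 0 ≤ μ) (hc : 0 ≤ c) :
    c * 2 ^ (-μ) * (1 + t ^ 2) ^ (-(μ / 2)) ≤ c * (1 + |t|) ^ (-μ) := by
  have hp := one_add_sq_pos t
  have h1 : (2:ℝ) ^ (-μ) * (1 + t ^ 2) ^ (-(μ / 2)) = (2 * √(1 + t ^ 2)) ^ (-μ) := by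
    rw [Real.mul_rpow (by norm_num) (Real.sqrt_nonneg _), Real.sqrt_eq_rpow,
      ← Real.rpow_mul hp.le]
    congr 2; ring
  rw [mul_assoc, h1]
  apply mul_le_mul_of_nonneg_left _ hc
  apply Real.rpow_le_rpow_of_nonpos (by positivity) _ (by linarith)
  have h2 : |t| ≤ √(1 + t ^ 2) := Real.abs_le_sqrt (by linarith)
  have h3 : 1 ≤ √(1 + t ^ 2) := Real.one_le_sqrt.2 (by nlinarith [sq_nonneg t])
  linarith

lemma combine {L I1 I2 I3 J Z k3 kJ k1 k0 j1 j2 j0 : ℝ} (hI1 : 0 ≤ I1) (hI2 : 0 ≤ I2)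
    (hI3 : 0 ≤ I3) (hk3 : 0 ≤ k3) (hkJ : 0 ≤ kJ) (hk1 : 0 ≤ k1) (hk0 : 0 ≤ k0) (hj1 : 0 ≤ j1)
    (hj2 : 0 ≤ j2) (hj0 : 0 ≤ j0) (hZ : Z ≤ I1)
    (hL : L ≤ 2 * (k3 * I3 + kJ * J + k1 * Z) + k0) (hJ : J ≤ j1 * I1 + j2 * I2 + j0) :
    L ≤ (2 * k3 + 2 * kJ * (j1 + j2 + j0) + 2 * k1 + k0 + 1) * (1 + I1 + I2 + I3) := by
  have h1 : kJ * J ≤ kJ * (j1 * I1 + j2 * I2 + j0) := by gcongr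
  have h2 : k1 * Z ≤ k1 * I1 := by gcongr
  have e : L ≤ 2 * k3 * I3 + 2 * (kJ * (j1 * I1 + j2 * I2 + j0)) + 2 * k1 * I1 + k0 := by
    linarith
  have f1 : 2 * k3 * I3 ≤ 2 * k3 * (1 + I1 + I2 + I3) := by gcongr; linarith
  have f2 : j1 * I1 ≤ j1 * (1 + I1 + I2 + I3) := by gcongr; linarith
  have f3 : j2 * I2 ≤ j2 * (1 + I1 + I2 + I3) := by gcongr; linarith
  have f4 : j0 * 1 ≤ j0 * (1 + I1 + I2 + I3) := by gcongr; linarith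
  have f5 : 2 * k1 * I1 ≤ 2 * k1 * (1 + I1 + I2 + I3) := by gcongr; linarith
  have f6 : k0 * 1 ≤ k0 * (1 + I1 + I2 + I3) := by gcongr; linarith
  have f7 : kJ * (j1 * I1 + j2 * I2 + j0) ≤ kJ * ((j1 + j2 + j0) * (1 + I1 + I2 + I3)) := by
    gcongr; linarith
  nlinarith

/-- in the modified splitting setting with `|u| ≤ M`, `s = -1/2 + τ_s`,
`α = -1/2 + τ_α` (`τ_s, τ_α > 0`), for every `l ≥ 1` and cut-off `η`:
`∫ η^{2l} Γ₁^{s+1} ≤ c [1 + ∫ |∇η|² η^{2l-2} Γ₁^{α+1} + ∫ |∇η|² η^{2l-2} Γ₁^{(α+1)/(1-γ)}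
  + ∫ η^{2l} Γ₁^{2s-α+μ₁/2}]` with `c` independent of `δ` and `u`. -/
theorem iteration_negative_exponents
    (Ω : Set (EuclideanSpace ℝ (Fin 2))) (hΩo : IsOpen Ω) (hΩb : Bornology.IsBounded Ω)
    (f₁ f₂ : ℝ → ℝ) (hf₁ : ContDiff ℝ 2 f₁) (hf₂ : ContDiff ℝ 2 f₂)
    (c₁ c₂ cb₁ cb₂ μ₁ μ₂ γ : ℝ)
    (hc₁ : 0 < c₁) (hc₂ : 0 < c₂) (hcb₁ : 0 < cb₁) (hcb₂ : 0 < cb₂)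
    (hμ₁ : 1 < μ₁) (hμ₂ : 1 < μ₂) (hμ₁' : μ₁ < 2)
    (hγ₀ : 0 ≤ γ) (hγ : γ < (2 - μ₁) / (1 + (2 - μ₁)))
    (hell₁ : ∀ t : ℝ, c₁ * (1 + |t|) ^ (-μ₁) ≤ deriv (deriv f₁) t ∧ deriv (deriv f₁) t ≤ cb₁)
    (hell₂ : ∀ t : ℝ, c₂ * (1 + |t|) ^ (-μ₂) ≤ deriv (deriv f₂) t ∧
      deriv (deriv f₂) t ≤ cb₂ * (1 + |t|) ^ γ)
    (M : ℝ) (hM : 0 < M)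
    (τs τα s α : ℝ) (hτs : 0 < τs) (hτα : 0 < τα)
    (hsdef : s = -(1/2) + τs) (hαdef : α = -(1/2) + τα)
    (l : ℕ) (hl : 1 ≤ l) :
    ∀ (η : EuclideanSpace ℝ (Fin 2) → ℝ), ContDiff ℝ (⊤ : ℕ∞) η →
      HasCompactSupport η → tsupport η ⊆ Ω →
      (∀ x, 0 ≤ η x) → (∀ x, η x ≤ 1) →
    ∃ c : ℝ, 0 < c ∧
      ∀ (δ : ℝ), 0 < δ → δ ≤ 1 →
      ∀ (u : EuclideanSpace ℝ (Fin 2) → ℝ), ContDiff ℝ (⊤ : ℕ∞) u →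
      (∀ x ∈ Ω, |u x| ≤ M) →
      (∀ x ∈ Ω, (δ + deriv (deriv f₁) (pd 0 u x)) * pd 0 (pd 0 u) x
          + (δ * (γ + 1) * |pd 1 u x| ^ γ + deriv (deriv f₂) (pd 1 u x))
            * pd 1 (pd 1 u) x = 0) →
      (∫ x in Ω, η x ^ (2 * l) * (1 + (pd 0 u x) ^ 2) ^ (s + 1))
      ≤ c * (1
          + (∫ x in Ω, ((pd 0 η x) ^ 2 + (pd 1 η x) ^ 2) * η x ^ (2 * l - 2)
              * (1 + (pd 0 u x) ^ 2) ^ (α + 1))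
          + (∫ x in Ω, ((pd 0 η x) ^ 2 + (pd 1 η x) ^ 2) * η x ^ (2 * l - 2)
              * (1 + (pd 0 u x) ^ 2) ^ ((α + 1) / (1 - γ)))
          + ∫ x in Ω, η x ^ (2 * l)
              * (1 + (pd 0 u x) ^ 2) ^ (2 * s - α + μ₁ / 2)) := by
  intro η hη hc hsupp hη0 hη1
  obtain ⟨n, rfl⟩ : ∃ n, l = n + 1 := ⟨l - 1, by omega⟩
  have hγ1 : γ < 1 := hγ.trans (by rw [div_lt_one (by linarith)]; linarith)
  obtain ⟨ψ, hψ, hψc, hψs, hψ0, hψ1, hψη⟩ := exists_cutoff (K := tsupport η) hc.isCompact hΩo hsupp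
  obtain ⟨Bη, hBη0, hBη⟩ := exists_bound hη hc
  obtain ⟨Bψ, hBψ0, hBψ⟩ := exists_bound hψ hψc
  obtain ⟨C, hCdef⟩ : ∃ C, C = 2 + cb₁ + cb₂ := ⟨_, rfl⟩
  have hC : 0 ≤ C := by rw [hCdef]; positivity
  obtain ⟨m, hmdef⟩ : ∃ m, m = c₂ * 2 ^ (-μ₂) := ⟨_, rfl⟩
  have hm : 0 < m := by rw [hmdef]; positivity
  obtain ⟨c3, hc3def⟩ : ∃ c3, c3 = c₁ * 2 ^ (-μ₁) := ⟨_, rfl⟩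
  have hc3 : 0 < c3 := by rw [hc3def]; positivity
  obtain ⟨κ, hκdef⟩ : ∃ κ, κ = min 1 (1 + 2 * α) := ⟨_, rfl⟩
  have hκ : 0 < κ := by rw [hκdef]; apply lt_min <;> linarith
  have hκ1 : κ ≤ 1 := hκdef ▸ min_le_left _ _
  have hκ2 : κ ≤ 1 + 2 * α := hκdef ▸ min_le_right _ _
  obtain ⟨K, hK⟩ : ∃ K, K = 3 * (M * Bψ) := ⟨_, rfl⟩
  have hK0 : 0 ≤ K := by rw [hK]; positivity
  obtain ⟨W, hW⟩ : ∃ W, W = (2 / m) * ((m / 2 + 2 * (K * C * ((1 + 2 * K) * (2 * K)))) *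
    volume.real (tsupport ψ)) := ⟨_, rfl⟩
  have hW0 : 0 ≤ W := by rw [hW]; positivity
  obtain ⟨V, hV⟩ : ∃ V, V = ∫ x, ψ x ^ 3 := ⟨_, rfl⟩
  have hV0 : 0 ≤ V := by rw [hV]; exact integral_nonneg fun x => pow_nonneg (hψ0 x) 3
  have hηn : ∀ x, 0 ≤ η x ^ (2 * n) * η x ^ 2 := fun x =>
    mul_nonneg (pow_nonneg (hη0 x) _) (pow_nonneg (hη0 x) _)
  obtain ⟨Vη, hVη⟩ : ∃ V, V = ∫ x, η x ^ (2 * n) * η x ^ 2 := ⟨_, rfl⟩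
  have hVη0 : 0 ≤ Vη := by rw [hVη]; exact integral_nonneg hηn
  obtain ⟨r, hr⟩ : ∃ r, r = (2 / κ) * (2 * ((n : ℝ) + 1) ^ 2 / κ) := ⟨_, rfl⟩
  have hr0 : 0 ≤ r := by rw [hr]; positivity
  refine ⟨2 * (M * (1 + 2 * |s|) / 2 + M * ((n : ℝ) + 1)) + 2 * (M * (1 + 2 * |s|) / 2 / c3) *
    (r * C + r * C + r * (C * Bη ^ 2 * (V + W))) + 2 * (M * ((n : ℝ) + 1)) +
    2 ^ (s + 1) * Vη + 1, by positivity, ?_⟩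
  intro δ hδ0 hδ1 u hu huM heu
  set a₁ : ℝ → ℝ := fun t => δ + deriv (deriv f₁) t with ha₁def
  set a₂ : ℝ → ℝ := fun t => δ * (γ + 1) * |t| ^ γ + deriv (deriv f₂) t with ha₂def
  have hdd : ∀ f : ℝ → ℝ, ContDiff ℝ 2 f → Continuous (deriv (deriv f)) := by
    intro f hf
    have h := hf.continuous_iteratedDeriv 2 le_rfl
    rwa [iteratedDeriv_succ, iteratedDeriv_one] at h
  have ha₁ : Continuous a₁ := continuous_const.add (hdd f₁ hf₁)
  have ha₂ : Continuous a₂ :=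
    (continuous_const.mul (continuous_abs.rpow_const fun _ => Or.inr hγ₀)).add (hdd f₂ hf₂)
  have h₁l : ∀ t : ℝ, c3 * (1 + t ^ 2) ^ (-(μ₁ / 2)) ≤ a₁ t := by
    intro t
    have h := lower_gam (t := t) (μ := μ₁) (by linarith) hc₁.le
    have h' := (hell₁ t).1
    simp only [ha₁def, hc3def]
    linarith
  have h₁ : ∀ t, 0 ≤ a₁ t := by
    intro t
    have := h₁l t
    have : 0 ≤ c3 * (1 + t ^ 2) ^ (-(μ₁ / 2)) := by positivity
    linarith
  have h₂l : ∀ t : ℝ, c₂ * (1 + |t|) ^ (-μ₂) ≤ a₂ t := by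
    intro t
    have h' := (hell₂ t).1
    have : 0 ≤ δ * (γ + 1) * |t| ^ γ := by positivity
    simp only [ha₂def]
    linarith
  have h₂ : ∀ t, 0 ≤ a₂ t := by
    intro t
    have := h₂l t
    have : 0 ≤ c₂ * (1 + |t|) ^ (-μ₂) := by positivity
    linarith
  have hm₂ : ∀ t, |t| ≤ 1 → m ≤ a₂ t := by
    intro t ht
    refine le_trans ?_ (h₂l t)
    rw [hmdef]
    apply mul_le_mul_of_nonneg_left _ hc₂.le
    exact Real.rpow_le_rpow_of_nonpos (by positivity) (by linarith) (by linarith)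
  have hC₁ : ∀ t, a₁ t ≤ C := by
    intro t
    have := (hell₁ t).2
    simp only [ha₁def, hCdef]
    linarith
  have hC₂ : ∀ t, a₂ t ≤ C * (1 + |t|) ^ γ := by
    intro t
    have h' := (hell₂ t).2
    have h1 : |t| ^ γ ≤ (1 + |t|) ^ γ :=
      Real.rpow_le_rpow (abs_nonneg t) (by linarith) hγ₀
    have h2 : δ * (γ + 1) * |t| ^ γ ≤ 1 * 2 * (1 + |t|) ^ γ := by
      gcongr
      linarith
    have h3 : 0 ≤ cb₁ * (1 + |t|) ^ γ := by positivity
    simp only [ha₂def, hCdef]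
    linarith
  have hC₁' : ∀ t, a₁ t ≤ C * (1 + |t|) := by
    intro t
    refine (hC₁ t).trans ?_
    nlinarith [mul_nonneg hC (abs_nonneg t)]
  have hC₂' : ∀ t, a₂ t ≤ C * (1 + |t|) := by
    intro t
    refine (hC₂ t).trans ?_
    gcongr
    have h1 : (1:ℝ) ≤ 1 + |t| := by linarith [abs_nonneg t]
    simpa using Real.rpow_le_rpow_of_exponent_le h1 hγ1.le
  have hen := energy ha₁ ha₂ h₁ h₂ hC hm hC₁' hC₂' hm₂ hu hψ hψc hψ0 hψ1
    (fun x hx => huM x (hψs hx)) hBψ (fun x hx => heu x (hψs hx)) hK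
  have hca := cacc ha₁ ha₂ h₁ h₂ hu hη hc (fun x hx => heu x (hsupp hx)) hκ hκ1 hκ2 n
  have hA := stepA (s := s) (α := α) ha₁ hu hη hc hη0 (fun x hx => huM x (hsupp hx))
    (by linarith) (by linarith) hc3 h₁l n
  have hB := stepB (α := α) ha₁ ha₂ hu hη hc hη0 hη1 hψ.continuous hψc hψ0 hψη hBη hC hγ₀ hγ1
    hC₁ hC₂ n
  have hWi : Integrable fun x => ψ x ^ 3 * |pd 1 u x| :=
    intg hψc ((hψ.continuous.pow 3).mul (pd_smooth 1 hu).continuous.abs)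
      fun x hx => by simp [eta_zero hx]
  have hψi : Integrable fun x => ψ x ^ 3 :=
    intg hψc (hψ.continuous.pow 3) fun x hx => by simp [eta_zero hx]
  have hsplit : ∫ x, ψ x ^ 3 * (1 + |pd 1 u x|) ≤ V + W := by
    have : (∫ x, ψ x ^ 3 * (1 + |pd 1 u x|)) = V + ∫ x, ψ x ^ 3 * |pd 1 u x| := by
      rw [hV, ← integral_add hψi hWi]
      congr 1
      ext x
      ring
    rw [this]
    have : ∫ x, ψ x ^ 3 * |pd 1 u x| ≤ W := by
      rw [hW]
      calc ∫ x, ψ x ^ 3 * |pd 1 u x| = 2 / m * (m / 2 * ∫ x, ψ x ^ 3 * |pd 1 u x|) := by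
            field_simp
        _ ≤ _ := by gcongr
    linarith
  have hv : ContDiff ℝ ∞ (pd 0 u) := pd_smooth 0 hu
  have hηi : ∀ i, Continuous (pd i η) := fun i => (pd_smooth i hη).continuous
  have hηc := hη.continuous
  have hΓ : ∀ p : ℝ, Continuous fun x => (1 + pd 0 u x ^ 2) ^ p := fun p =>
    (Gcont (n := 0) p).continuous.comp hv.continuous
  have hΓ0 : ∀ (p : ℝ) x, 0 ≤ (1 + pd 0 u x ^ 2) ^ p := fun p x =>
    (Real.rpow_pos_of_pos (one_add_sq_pos _) _).le
  have hgr0 : ∀ x, 0 ≤ (pd 0 η x ^ 2 + pd 1 η x ^ 2) * η x ^ (2 * n) := fun x =>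
    mul_nonneg (by positivity) (pow_nonneg (hη0 x) _)
  have hZ : ∫ x, η x ^ (2 * n) * (1 + pd 0 u x ^ 2) ^ (α + 1) * pd 0 η x ^ 2 ≤
      ∫ x, (pd 0 η x ^ 2 + pd 1 η x ^ 2) * η x ^ (2 * n) * (1 + pd 0 u x ^ 2) ^ (α + 1) := by
    apply integral_mono
    · exact intg hc (((hηc.pow _).mul (hΓ _)).mul ((hηi 0).pow 2)) fun x hx => by
        simp [pd_zero _ hx]
    · exact intg hc (((((hηi 0).pow 2).add ((hηi 1).pow 2)).mul (hηc.pow _)).mul (hΓ _))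
        fun x hx => by simp [pd_zero _ hx]
    · intro x
      have := mul_nonneg (mul_nonneg (sq_nonneg (pd 1 η x)) (pow_nonneg (hη0 x) (2 * n)))
        (hΓ0 (α + 1) x)
      simp only
      linarith
  have hsub : ∀ F : E2 → ℝ, (∀ x, x ∉ tsupport η → F x = 0) → ∫ x in Ω, F x = ∫ x, F x :=
    fun F hF => setIntegral_eq_integral_of_forall_compl_eq_zero fun x hx =>
      hF x fun h => hx (hsupp h)
  have e1 : 2 * (n + 1) - 2 = 2 * n := by omega
  have e2 : ∀ x, η x ^ (2 * (n + 1)) = η x ^ (2 * n) * η x ^ 2 := fun x => by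
    rw [← pow_add]; rfl
  simp only [e1, e2]
  rw [hsub _ (fun x hx => by simp [eta_zero hx]), hsub _ (fun x hx => by simp [pd_zero _ hx]),
    hsub _ (fun x hx => by simp [pd_zero _ hx]), hsub _ (fun x hx => by simp [eta_zero hx])]
  rw [← hVη] at hA
  refine combine (integral_nonneg fun x => mul_nonneg (hgr0 x) (hΓ0 _ x))
    (integral_nonneg fun x => mul_nonneg (hgr0 x) (hΓ0 _ x))
    (integral_nonneg fun x => mul_nonneg (hηn x) (hΓ0 _ x)) (by positivity) (by positivity)
    (by positivity) (by positivity) (by positivity) (by positivity) (by positivity) hZ hA ?_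
  have hB' := hB.trans (add_le_add_right (mul_le_mul_of_nonneg_left hsplit
    (show 0 ≤ C * Bη ^ 2 by positivity)) _)
  have hca' := mul_le_mul_of_nonneg_left hca (show 0 ≤ 2 / κ by positivity)
  rw [← mul_assoc, ← mul_assoc, ← hr, div_mul_div_comm, mul_comm 2 κ, div_self (by positivity),
    one_mul] at hca'
  refine hca'.trans ((mul_le_mul_of_nonneg_left hB' hr0).trans (le_of_eq ?_))
  ring
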